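/- arXiv:math/0002164 — 9 statements merged into one kernel-verified Lean document; each statement's English description precedes it below -/
import Mathlib

section
/- Let m be a natural number and let Q : Fin m → Fin m → MvPolynomial (Fin m) ℂ satisfy Q b a = -(Q a b) for all a, b. Define a bracket on MvPolynomial (Fin m) ℂ by {u,v} := ∑_{a,b} (Q a b) * (pderiv a u) * (pderiv b v). Then the Jacobi identity {u,{v,w}} + {v,{w,u}} + {w,{u,v}} = 0 holds for all polynomials u, v, w if and only if for all indices b, c, d one has ∑_{a} ( (Q b a) * pderiv a (Q c d) + (Q c a) * pderiv a (Q d b) + (Q d a) * pderiv a (Q b c) ) = 0. -/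
open MvPolynomial

/-- The Poisson-type bracket `{u,v} = ∑_{a,b} Q^{ab} ∂_a u ∂_b v`. -/
noncomputable def poissonBracket {m : ℕ} (Q : Fin m → Fin m → MvPolynomial (Fin m) ℂ)
    (u v : MvPolynomial (Fin m) ℂ) : MvPolynomial (Fin m) ℂ :=
  ∑ a : Fin m, ∑ b : Fin m, Q a b * pderiv a u * pderiv b v

theorem aux_pderiv_comm {m : ℕ} (a b : Fin m) (p : MvPolynomial (Fin m) ℂ) :
    pderiv a (pderiv b p) = pderiv b (pderiv a p) := by
  have h : ⁅(pderiv a : Derivation ℂ (MvPolynomial (Fin m) ℂ) (MvPolynomial (Fin m) ℂ)),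
      (pderiv b : Derivation ℂ (MvPolynomial (Fin m) ℂ) (MvPolynomial (Fin m) ℂ))⁆ = 0 := by
    apply MvPolynomial.derivation_ext
    intro i
    rw [Derivation.commutator_apply, pderiv_X, pderiv_X]
    by_cases h1 : i = a <;> by_cases h2 : i = b <;> simp [Pi.single_apply, h1, h2] <;>
      split_ifs <;> simp
  have h2 := congrArg (fun D => D p) h
  simp only [Derivation.commutator_apply, Derivation.coe_zero, Pi.zero_apply] at h2
  exact sub_eq_zero.mp h2

noncomputable def auxT {m : ℕ} (Q : Fin m → Fin m → MvPolynomial (Fin m) ℂ)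
    (u v w : MvPolynomial (Fin m) ℂ) : MvPolynomial (Fin m) ℂ :=
  ∑ b : Fin m, ∑ c : Fin m, ∑ d : Fin m,
    pderiv b u * pderiv c v * pderiv d w * ∑ a : Fin m, Q b a * pderiv a (Q c d)

noncomputable def auxS {m : ℕ} (Q : Fin m → Fin m → MvPolynomial (Fin m) ℂ)
    (u v w : MvPolynomial (Fin m) ℂ) : MvPolynomial (Fin m) ℂ :=
  ∑ a : Fin m, ∑ b : Fin m, ∑ c : Fin m, ∑ d : Fin m,
    Q a b * Q c d * pderiv a u * pderiv b (pderiv c v) * pderiv d w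

theorem aux_bracket {m : ℕ} (Q : Fin m → Fin m → MvPolynomial (Fin m) ℂ)
    (hskew : ∀ a b : Fin m, Q b a = -(Q a b)) (u v w : MvPolynomial (Fin m) ℂ) :
    poissonBracket Q u (poissonBracket Q v w) = auxT Q u v w + auxS Q u v w - auxS Q u w v := by
  have hT : auxT Q u v w = ∑ a : Fin m, ∑ b : Fin m, ∑ c : Fin m, ∑ d : Fin m,
      pderiv a u * pderiv c v * pderiv d w * (Q a b * pderiv b (Q c d)) := by
    unfold auxT
    refine Finset.sum_congr rfl fun a _ => ?_
    rw [Finset.sum_comm]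
    simp only [Finset.mul_sum]
    rw [Finset.sum_comm]
    conv_rhs => rw [Finset.sum_comm]
    refine Finset.sum_congr rfl fun c _ => ?_
    rw [Finset.sum_comm]
  have hS : auxS Q u w v = ∑ a : Fin m, ∑ b : Fin m, ∑ c : Fin m, ∑ d : Fin m,
      Q a b * Q d c * pderiv a u * pderiv b (pderiv d w) * pderiv c v := by
    unfold auxS
    refine Finset.sum_congr rfl fun a _ => Finset.sum_congr rfl fun b _ => ?_
    rw [Finset.sum_comm]
  rw [hT, hS]
  unfold auxS poissonBracket
  simp only [← Finset.sum_add_distrib, ← Finset.sum_sub_distrib, map_sum, Finset.mul_sum]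
  refine Finset.sum_congr rfl fun a _ => Finset.sum_congr rfl fun b _ =>
    Finset.sum_congr rfl fun c _ => Finset.sum_congr rfl fun d _ => ?_
  rw [hskew c d]
  simp only [Derivation.leibniz, smul_eq_mul]
  ring

theorem auxS_symm {m : ℕ} (Q : Fin m → Fin m → MvPolynomial (Fin m) ℂ)
    (hskew : ∀ a b : Fin m, Q b a = -(Q a b)) (u v w : MvPolynomial (Fin m) ℂ) :
    auxS Q w v u = auxS Q u v w := by
  have e : ∀ f : Fin m → Fin m → Fin m → Fin m → MvPolynomial (Fin m) ℂ,
      ∑ a, ∑ b, ∑ c, ∑ d, f a b c d = ∑ a, ∑ b, ∑ c, ∑ d, f d c b a := by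
    intro f
    have k : ∀ f : Fin m → Fin m → Fin m → Fin m → MvPolynomial (Fin m) ℂ,
        ∑ a, ∑ b, ∑ c, ∑ d, f a b c d =
          ∑ x : Fin m × Fin m × Fin m × Fin m, f x.1 x.2.1 x.2.2.1 x.2.2.2 := by
      intro f
      simp only [Fintype.sum_prod_type]
    rw [k, k]
    let r : Fin m × Fin m × Fin m × Fin m → Fin m × Fin m × Fin m × Fin m :=
      fun x => (x.2.2.2, x.2.2.1, x.2.1, x.1)
    exact Fintype.sum_equiv ⟨r, r, fun _ => rfl, fun _ => rfl⟩ _ _ (fun _ => rfl)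
  unfold auxS
  rw [e]
  refine Finset.sum_congr rfl fun a _ => Finset.sum_congr rfl fun b _ =>
    Finset.sum_congr rfl fun c _ => Finset.sum_congr rfl fun d _ => ?_
  rw [hskew c d, hskew a b, aux_pderiv_comm c b]
  ring

theorem aux_jacobi {m : ℕ} (Q : Fin m → Fin m → MvPolynomial (Fin m) ℂ)
    (hskew : ∀ a b : Fin m, Q b a = -(Q a b)) (u v w : MvPolynomial (Fin m) ℂ) :
    poissonBracket Q u (poissonBracket Q v w)
          + poissonBracket Q v (poissonBracket Q w u)
          + poissonBracket Q w (poissonBracket Q u v) =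
    ∑ b : Fin m, ∑ c : Fin m, ∑ d : Fin m,
      pderiv b u * pderiv c v * pderiv d w *
      ∑ a : Fin m, (Q b a * pderiv a (Q c d) + Q c a * pderiv a (Q d b)
          + Q d a * pderiv a (Q b c)) := by
  have e : ∀ f : Fin m → Fin m → Fin m → MvPolynomial (Fin m) ℂ,
      ∑ a, ∑ b, ∑ c, f a b c = ∑ a, ∑ b, ∑ c, f b c a := by
    intro f
    conv_rhs => 
      rw [Finset.sum_comm]
      enter [2, b]
      rw [Finset.sum_comm]
  have e1 : auxT Q v w u = ∑ b : Fin m, ∑ c : Fin m, ∑ d : Fin m,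
      pderiv b u * pderiv c v * pderiv d w * ∑ a : Fin m, Q c a * pderiv a (Q d b) := by
    unfold auxT
    rw [e]
    refine Finset.sum_congr rfl fun a _ => Finset.sum_congr rfl fun b _ =>
      Finset.sum_congr rfl fun c _ => ?_
    ring
  have e2 : auxT Q w u v = ∑ b : Fin m, ∑ c : Fin m, ∑ d : Fin m,
      pderiv b u * pderiv c v * pderiv d w * ∑ a : Fin m, Q d a * pderiv a (Q b c) := by
    unfold auxT
    rw [e, e]
    refine Finset.sum_congr rfl fun a _ => Finset.sum_congr rfl fun b _ =>
      Finset.sum_congr rfl fun c _ => ?_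
    ring
  rw [aux_bracket Q hskew, aux_bracket Q hskew, aux_bracket Q hskew,
    auxS_symm Q hskew u v w, auxS_symm Q hskew v w u, auxS_symm Q hskew w u v]
  simp only [Finset.sum_add_distrib, mul_add]
  rw [← e1, ← e2]
  unfold auxT
  ring

theorem stmt_0 (m : ℕ) (Q : Fin m → Fin m → MvPolynomial (Fin m) ℂ)
    (hskew : ∀ a b : Fin m, Q b a = -(Q a b)) :
    (∀ u v w : MvPolynomial (Fin m) ℂ,
        poissonBracket Q u (poissonBracket Q v w)
          + poissonBracket Q v (poissonBracket Q w u)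
          + poissonBracket Q w (poissonBracket Q u v) = 0) ↔
      (∀ b c d : Fin m,
        ∑ a : Fin m, (Q b a * pderiv a (Q c d) + Q c a * pderiv a (Q d b)
          + Q d a * pderiv a (Q b c)) = 0) := by
  constructor
  · intro h b c d
    have h1 : ∀ (b : Fin m) (p : MvPolynomial (Fin m) ℂ),
        poissonBracket Q (X b) p = ∑ a, Q b a * pderiv a p := by
      intro b p
      unfold poissonBracket
      rw [Finset.sum_eq_single b]
      · simp
      · intro a _ hab
        simp [pderiv_X_of_ne hab.symm]
      · simp
    have h2 : ∀ c d : Fin m, poissonBracket Q (X c) (X d) = Q c d := by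
      intro c d
      rw [h1, Finset.sum_eq_single d]
      · simp
      · intro a _ hab
        simp [pderiv_X_of_ne hab.symm]
      · simp
    have h3 := h (X b) (X c) (X d)
    simp only [h2] at h3
    simp only [h1] at h3
    simpa only [Finset.sum_add_distrib] using h3
  · intro h u v w
    rw [aux_jacobi Q hskew]
    simp [h]
end

section
/- Let ι be a finite type and let f : ι → MvPolynomial ι ℂ. Then there exists a unique ℂ-algebra homomorphism F : R → R such that F(t^a_0) = ĵ(f a) for every a ∈ ι and F(∂u) = ∂(F u) for every u ∈ R. (Explicitly, F is determined by F(t^a_k) = ∂^k(ĵ(f a)).) -/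
open MvPolynomial

/-- Prolongation of a polynomial map to the jet algebra: existence and uniqueness of the
algebra endomorphism `F` with `F t^a_0 = ĵ(f a)` commuting with the total derivative. -/
theorem stmt_1 (ι : Type*) [Fintype ι] (f : ι → MvPolynomial ι ℂ)
    (D : Derivation ℂ (MvPolynomial (ι × ℕ) ℂ) (MvPolynomial (ι × ℕ) ℂ))
    (hD : ∀ (a : ι) (k : ℕ), D (X (a, k)) = X (a, k + 1)) :
    ∃! F : MvPolynomial (ι × ℕ) ℂ →ₐ[ℂ] MvPolynomial (ι × ℕ) ℂ,
      (∀ a : ι, F (X (a, 0)) = rename (fun a : ι => (a, 0)) (f a)) ∧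
        (∀ u : MvPolynomial (ι × ℕ) ℂ, F (D u) = D (F u)) := by
  refine ⟨aeval (fun p : ι × ℕ =>
    (fun x => D x)^[p.2] (rename (fun a : ι => (a, 0)) (f p.1))), ⟨?_, ?_⟩, ?_⟩
  · intro a
    simp
  · intro u
    induction u using MvPolynomial.induction_on with
    | C c =>
      rw [← MvPolynomial.algebraMap_eq, Derivation.map_algebraMap, AlgHom.commutes,
        Derivation.map_algebraMap, map_zero]
    | add p q hp hq => simp only [map_add, hp, hq]
    | mul_X p n hp =>
      obtain ⟨a, k⟩ := n
      rw [Derivation.leibniz, map_add, smul_eq_mul, smul_eq_mul, map_mul, map_mul, hp, map_mul,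
        Derivation.leibniz, smul_eq_mul, smul_eq_mul, hD, aeval_X, aeval_X]
      simp only [Function.iterate_succ_apply']
  · rintro G ⟨h0, h1⟩
    apply MvPolynomial.algHom_ext
    rintro ⟨a, k⟩
    rw [aeval_X]
    induction k with
    | zero => exact h0 a
    | succ k ih =>
      rw [← hD, h1, ih]
      simp only [Function.iterate_succ_apply']
end

section
/- Let ι be a finite type. For every u ∈ R, every a ∈ ι and all natural numbers k, ℓ, one has ∂_{k,a}(∂^ℓ u) = ∑_{j=0}^{min(k,ℓ)} (ℓ choose j) · ∂^{ℓ-j}( ∂_{k-j,a} u ). -/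
open MvPolynomial

theorem aux_comm_zero {ι : Type*}
    (D : Derivation ℂ (MvPolynomial (ι × ℕ) ℂ) (MvPolynomial (ι × ℕ) ℂ))
    (hD : ∀ (a : ι) (k : ℕ), D (X (a, k)) = X (a, k + 1))
    (u : MvPolynomial (ι × ℕ) ℂ) (a : ι) :
    pderiv (a, 0) (D u) = D (pderiv (a, 0) u) := by
  classical
  have h : ⁅(pderiv (a, 0) : Derivation ℂ (MvPolynomial (ι × ℕ) ℂ) _), D⁆ = 0 := by
    apply MvPolynomial.derivation_ext
    rintro ⟨b, m⟩
    rw [Derivation.commutator_apply, hD, pderiv_X, pderiv_X]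
    by_cases hb : b = a <;> by_cases hm : m = 0 <;> simp [Pi.single_apply, hb, hm]
  have := congrArg (fun E => E u) h
  simpa [Derivation.commutator_apply, sub_eq_zero] using this

theorem aux_comm_succ {ι : Type*}
    (D : Derivation ℂ (MvPolynomial (ι × ℕ) ℂ) (MvPolynomial (ι × ℕ) ℂ))
    (hD : ∀ (a : ι) (k : ℕ), D (X (a, k)) = X (a, k + 1))
    (u : MvPolynomial (ι × ℕ) ℂ) (a : ι) (k : ℕ) :
    pderiv (a, k + 1) (D u) = D (pderiv (a, k + 1) u) + pderiv (a, k) u := by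
  classical
  have h : ⁅(pderiv (a, k + 1) : Derivation ℂ (MvPolynomial (ι × ℕ) ℂ) _), D⁆
      = pderiv (a, k) := by
    apply MvPolynomial.derivation_ext
    rintro ⟨b, m⟩
    rw [Derivation.commutator_apply, hD, pderiv_X, pderiv_X, pderiv_X]
    by_cases hb : b = a <;> by_cases hm : m = k + 1 <;> by_cases hm' : m = k <;>
      simp [Pi.single_apply, hb, hm, hm']
  have := congrArg (fun E => E u) h
  simp only [Derivation.commutator_apply] at this
  rw [← this]; ring

theorem aux_main {ι : Type*}
    (D : Derivation ℂ (MvPolynomial (ι × ℕ) ℂ) (MvPolynomial (ι × ℕ) ℂ))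
    (hD : ∀ (a : ι) (k : ℕ), D (X (a, k)) = X (a, k + 1))
    (u : MvPolynomial (ι × ℕ) ℂ) (a : ι) (ℓ : ℕ) : ∀ k : ℕ,
    pderiv (a, k) ((⇑D)^[ℓ] u) =
      ∑ j ∈ Finset.range (k + 1),
        ℓ.choose j • (⇑D)^[ℓ - j] (pderiv (a, k - j) u) := by
  induction ℓ with
  | zero =>
    intro k
    rw [Finset.sum_range_succ']
    simp
  | succ ℓ ih =>
    intro k
    rw [Function.iterate_succ_apply']
    cases k with
    | zero =>
      rw [aux_comm_zero D hD, ih]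
      simp [← Function.iterate_succ_apply' (⇑D)]
    | succ k =>
      rw [aux_comm_succ D hD, ih, ih, Finset.sum_range_succ', Finset.sum_range_succ' _ (k + 1),
        map_add, map_sum, add_right_comm, ← Finset.sum_add_distrib]
      congr 1
      · refine Finset.sum_congr rfl fun j _ => ?_
        rw [Nat.choose_succ_succ, add_smul, add_comm, map_nsmul, Nat.add_sub_add_right,
          Nat.add_sub_add_right]
        congr 1
        by_cases h : j + 1 ≤ ℓ
        · rw [← Function.iterate_succ_apply' (⇑D)]
          congr 3
          omega
        · rw [Nat.succ_eq_add_one, Nat.choose_eq_zero_of_lt (by omega), zero_smul, zero_smul]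
      · simp [← Function.iterate_succ_apply' (⇑D)]

/-- The commutation law `∂_{k,a} ∘ ∂^ℓ = ∑_j binom(ℓ,j) ∂^{ℓ-j} ∘ ∂_{k-j,a}`. -/
theorem stmt_2 (ι : Type*) [Fintype ι]
    (D : Derivation ℂ (MvPolynomial (ι × ℕ) ℂ) (MvPolynomial (ι × ℕ) ℂ))
    (hD : ∀ (a : ι) (k : ℕ), D (X (a, k)) = X (a, k + 1))
    (u : MvPolynomial (ι × ℕ) ℂ) (a : ι) (k ℓ : ℕ) :
    pderiv (a, k) ((⇑D)^[ℓ] u) =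
      ∑ j ∈ Finset.range (min k ℓ + 1),
        ℓ.choose j • (⇑D)^[ℓ - j] (pderiv (a, k - j) u) := by
  rw [aux_main D hD]
  symm
  apply Finset.sum_subset
  · intro j hj
    simp only [Finset.mem_range] at *
    omega
  · intro j hj hj'
    simp only [Finset.mem_range] at *
    rw [Nat.choose_eq_zero_of_lt (by omega), zero_smul]
end

section
/- Let ι be a finite type, f : ι → MvPolynomial ι ℂ, and let F : R → R be the unique ℂ-algebra homomorphism with F(t^a_0) = ĵ(f a) for all a and F ∘ ∂ = ∂ ∘ F. Set Ĵ_a^b := ĵ( pderiv a (f b) ) ∈ R (the Jacobian of f, prolonged to R). Then for every u ∈ R, every a ∈ ι and every k ∈ ℕ: ∂_{k,a}(F u) = ∑_{b ∈ ι} ∑_{ℓ ≥ k} (ℓ choose k) · ∂^{ℓ-k}(Ĵ_a^b) · F( ∂_{ℓ,b} u ), where the sum over ℓ has only finitely many nonzero terms since ∂_{ℓ,b} u = 0 for all large ℓ. -/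
open MvPolynomial

theorem aux_comm {ι : Type*}
    (D : Derivation ℂ (MvPolynomial (ι × ℕ) ℂ) (MvPolynomial (ι × ℕ) ℂ))
    (hD : ∀ (a : ι) (k : ℕ), D (X (a, k)) = X (a, k + 1)) (a : ι) (v : MvPolynomial (ι × ℕ) ℂ) :
    pderiv (a, 0) (D v) = D (pderiv (a, 0) v) ∧
    ∀ k, pderiv (a, k + 1) (D v) = D (pderiv (a, k + 1) v) + pderiv (a, k) v := by
  classical
  induction v using MvPolynomial.induction_on with
  | C r => simp [← MvPolynomial.algebraMap_eq]
  | add p q hp hq =>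
    refine ⟨by simp [hp.1, hq.1], fun k => ?_⟩
    simp only [map_add, hp.2 k, hq.2 k]; ring
  | mul_X p i hp =>
    obtain ⟨c, m⟩ := i
    refine ⟨?_, fun k => ?_⟩
    · simp only [Derivation.leibniz, hD, map_add, hp.1, smul_eq_mul, pderiv_X, Pi.single_apply,
        Prod.mk.injEq]
      split_ifs <;> simp_all <;> ring
    · simp only [Derivation.leibniz, hD, map_add, hp.2 k, smul_eq_mul, pderiv_X, Pi.single_apply,
        Prod.mk.injEq, Nat.add_right_cancel_iff]
      split_ifs <;> simp_all <;> ring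

theorem aux_iter {ι : Type*}
    (D : Derivation ℂ (MvPolynomial (ι × ℕ) ℂ) (MvPolynomial (ι × ℕ) ℂ))
    (hD : ∀ (a : ι) (k : ℕ), D (X (a, k)) = X (a, k + 1)) (a : ι) (g : MvPolynomial ι ℂ) (n : ℕ) :
    ∀ k, pderiv (a, k) ((⇑D)^[n] (rename (fun a : ι => (a, 0)) g)) =
      n.choose k • (⇑D)^[n - k] (rename (fun a : ι => (a, 0)) (pderiv a g)) := by
  classical
  induction n with
  | zero =>
    intro k
    cases k with
    | zero =>
      simpa using pderiv_rename (f := fun a : ι => (a, (0 : ℕ))) (fun x y h => by simpa using h) a g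
    | succ k =>
      simp only [Function.iterate_zero, id, Nat.choose_zero_succ, zero_smul]
      apply pderiv_eq_zero_of_notMem_vars
      intro h
      have := vars_rename (fun a : ι => (a, (0 : ℕ))) g h
      simp at this
  | succ n ih =>
    intro k
    rw [Function.iterate_succ_apply']
    cases k with
    | zero =>
      rw [(aux_comm D hD a _).1, ih 0]
      simp [← Function.iterate_succ_apply' (⇑D)]
    | succ k =>
      rw [(aux_comm D hD a _).2, ih, ih, map_nsmul, ← Function.iterate_succ_apply' (⇑D),
        Nat.choose_succ_succ, add_smul, add_comm, Nat.add_sub_add_right]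
      congr 1
      rcases lt_or_ge n (k + 1) with h | h
      · simp [Nat.choose_eq_zero_of_lt h]
      · congr 3; omega

theorem aux_fin {ι : Type*} (b : ι) (u : MvPolynomial (ι × ℕ) ℂ)
    (G : ℕ → MvPolynomial (ι × ℕ) ℂ → MvPolynomial (ι × ℕ) ℂ) (hG : ∀ l, G l 0 = 0) :
    (Function.support fun l : ℕ => G l (pderiv (b, l) u)).Finite := by
  classical
  refine (u.vars.image Prod.snd).finite_toSet.subset fun l hl => ?_
  by_contra h
  apply hl
  have : pderiv (b, l) u = 0 := by
    apply pderiv_eq_zero_of_notMem_vars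
    intro h'
    exact h (by simpa using ⟨b, h'⟩)
  simp [this, hG]

/-- The chain rule for partial derivatives of a prolonged map:
`∂_{k,a}(F u) = ∑_b ∑_{ℓ} binom(ℓ,k) ∂^{ℓ-k}(Ĵ_a^b) · F(∂_{ℓ,b} u)`
(the binomial coefficient vanishes for `ℓ < k`, and the sum over `ℓ` has finite support). -/
theorem stmt_3 (ι : Type*) [Fintype ι] (f : ι → MvPolynomial ι ℂ)
    (D : Derivation ℂ (MvPolynomial (ι × ℕ) ℂ) (MvPolynomial (ι × ℕ) ℂ))
    (hD : ∀ (a : ι) (k : ℕ), D (X (a, k)) = X (a, k + 1))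
    (F : MvPolynomial (ι × ℕ) ℂ →ₐ[ℂ] MvPolynomial (ι × ℕ) ℂ)
    (hF0 : ∀ a : ι, F (X (a, 0)) = rename (fun a : ι => (a, 0)) (f a))
    (hFD : ∀ u : MvPolynomial (ι × ℕ) ℂ, F (D u) = D (F u))
    (u : MvPolynomial (ι × ℕ) ℂ) (a : ι) (k : ℕ) :
    pderiv (a, k) (F u) =
      ∑ b : ι, ∑ᶠ ℓ : ℕ, ℓ.choose k •
        ((⇑D)^[ℓ - k] (rename (fun a : ι => (a, 0)) (pderiv a (f b)))
          * F (pderiv (b, ℓ) u)) := by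
  classical
  have hX : ∀ b n, F (X (b, n)) = (⇑D)^[n] (rename (fun a : ι => (a, 0)) (f b)) := by
    intro b n
    induction n with
    | zero => simp [hF0]
    | succ n ih => rw [← hD, hFD, ih, Function.iterate_succ_apply']
  set J : ι → MvPolynomial (ι × ℕ) ℂ := fun b => rename (fun a : ι => (a, 0)) (pderiv a (f b))
    with hJ
  have hfin : ∀ b (w v : MvPolynomial (ι × ℕ) ℂ), (Function.support fun l : ℕ =>
      l.choose k • ((⇑D)^[l - k] (J b) * (w * F (pderiv (b, l) v)))).Finite := fun b w v =>
    aux_fin b v (fun l x => l.choose k • ((⇑D)^[l - k] (J b) * (w * F x))) (by simp)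
  have hfin1 := fun b v => by simpa only [one_mul] using hfin b 1 v
  induction u using MvPolynomial.induction_on with
  | C r => simp [← MvPolynomial.algebraMap_eq]
  | add p q hp hq =>
    simp only [map_add, hp, hq, mul_add, smul_add]
    rw [← Finset.sum_add_distrib]
    refine Finset.sum_congr rfl fun b _ => ?_
    exact (finsum_add_distrib (hfin1 b p) (hfin1 b q)).symm
  | mul_X p i hp =>
    obtain ⟨c, m⟩ := i
    have key : ∀ b, (∑ᶠ l : ℕ, l.choose k • ((⇑D)^[l - k] (J b) * F (pderiv (b, l) (p * X (c, m)))))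
        = (if b = c then F p * (m.choose k • (⇑D)^[m - k] (J c)) else 0) +
          F (X (c, m)) * ∑ᶠ l : ℕ, l.choose k • ((⇑D)^[l - k] (J b) * F (pderiv (b, l) p)) := by
      intro b
      have h1 : ∀ l : ℕ, l.choose k • ((⇑D)^[l - k] (J b) * F (pderiv (b, l) (p * X (c, m)))) =
          l.choose k • ((⇑D)^[l - k] (J b) * (F p * F (pderiv (b, l) (X (c, m))))) +
          l.choose k • ((⇑D)^[l - k] (J b) * (F (X (c, m)) * F (pderiv (b, l) p))) := by
        intro l
        simp only [Derivation.leibniz, smul_eq_mul, map_add, map_mul, mul_add, smul_add]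
      rw [finsum_congr h1, finsum_add_distrib (hfin b _ _) (hfin b _ _), mul_finsum]
      congr 1
      · rw [finsum_eq_single _ m]
        · by_cases h : b = c
          · subst h
            simp [mul_comm, mul_left_comm]
          · have h' : ¬ c = b := fun e => h e.symm
            simp [pderiv_X, Pi.single_apply, h, h']
        · intro l hl
          simp [pderiv_X, Pi.single_apply, hl.symm]
      · refine finsum_congr fun l => ?_
        simp only [nsmul_eq_mul]; ring
    rw [Finset.sum_congr rfl fun b _ => key b, Finset.sum_add_distrib, ← Finset.mul_sum, ← hp,
      map_mul, Derivation.leibniz, smul_eq_mul, smul_eq_mul, hX, aux_iter D hD]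
    simp [hJ]
end

section
/- Let ι be a finite type, f : ι → MvPolynomial ι ℂ, and let F : R → R be the unique ℂ-algebra homomorphism with F(t^a_0) = ĵ(f a) for all a and F ∘ ∂ = ∂ ∘ F. Set Ĵ_a^b := ĵ( pderiv a (f b) ) ∈ R. Then for every u ∈ R, every a ∈ ι and every k ∈ ℕ: δ_{k,a}(F u) = ∑_{b ∈ ι} Ĵ_a^b · F( δ_{k,b} u ). -/
open MvPolynomial

/-- The higher Euler operator `δ_{k,a} u = ∑_i (-1)^i binom(k+i,k) ∂^i(∂_{k+i,a} u)`. -/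
noncomputable def eulerOp {ι : Type*}
    (D : Derivation ℂ (MvPolynomial (ι × ℕ) ℂ) (MvPolynomial (ι × ℕ) ℂ))
    (k : ℕ) (a : ι) (u : MvPolynomial (ι × ℕ) ℂ) : MvPolynomial (ι × ℕ) ℂ :=
  ∑ᶠ i : ℕ, ((-1 : ℂ) ^ i * ((k + i).choose k : ℂ)) • (⇑D)^[i] (pderiv (a, k + i) u)

section helpers
variable {ι : Type*}
  (D : Derivation ℂ (MvPolynomial (ι × ℕ) ℂ) (MvPolynomial (ι × ℕ) ℂ))

lemma comm_zero (hD : ∀ (a : ι) (k : ℕ), D (X (a, k)) = X (a, k + 1)) (a : ι)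
    (u : MvPolynomial (ι × ℕ) ℂ) :
    pderiv (a, 0) (D u) = D (pderiv (a, 0) u) := by
  classical
  have h : ⁅(pderiv (a, 0) : Derivation ℂ (MvPolynomial (ι × ℕ) ℂ) (MvPolynomial (ι × ℕ) ℂ)), D⁆
      = 0 := by
    apply MvPolynomial.derivation_ext
    rintro ⟨b, n⟩
    rw [Derivation.commutator_apply, hD, pderiv_X, pderiv_X]
    by_cases h : a = b <;> by_cases h' : n = 0 <;> simp [Pi.single_apply, h, h']
  have h2 := congrArg (fun E => E u) h
  simp only [Derivation.commutator_apply, Derivation.coe_zero, Pi.zero_apply] at h2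
  exact sub_eq_zero.mp h2

lemma comm_succ (hD : ∀ (a : ι) (k : ℕ), D (X (a, k)) = X (a, k + 1)) (a : ι) (m : ℕ)
    (u : MvPolynomial (ι × ℕ) ℂ) :
    pderiv (a, m + 1) (D u) = D (pderiv (a, m + 1) u) + pderiv (a, m) u := by
  classical
  have h : ⁅(pderiv (a, m + 1) : Derivation ℂ (MvPolynomial (ι × ℕ) ℂ) (MvPolynomial (ι × ℕ) ℂ)),
      D⁆ = pderiv (a, m) := by
    apply MvPolynomial.derivation_ext
    rintro ⟨b, n⟩
    rw [Derivation.commutator_apply, hD, pderiv_X, pderiv_X, pderiv_X]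
    simp only [Pi.single_apply, Prod.mk.injEq, add_left_inj]
    split_ifs <;> simp
  have h2 := congrArg (fun E => E u) h
  simp only [Derivation.commutator_apply] at h2
  rw [← h2]; ring

lemma pd_iter (hD : ∀ (a : ι) (k : ℕ), D (X (a, k)) = X (a, k + 1)) (a : ι)
    (g : MvPolynomial (ι × ℕ) ℂ) (hg : ∀ m, pderiv (a, m + 1) g = 0) (n : ℕ) : ∀ m,
    pderiv (a, m) ((⇑D)^[n] g) = (n.choose m : ℂ) • (⇑D)^[n - m] (pderiv (a, 0) g) := by
  induction n with
  | zero =>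
    rintro (_ | m)
    · simp
    · simp [hg]
  | succ n ih =>
    rintro (_ | m)
    · rw [Function.iterate_succ_apply', comm_zero D hD, ih 0]
      simp [← Function.iterate_succ_apply' (⇑D)]
    · rw [Function.iterate_succ_apply', comm_succ D hD, ih, ih, Nat.choose_succ_succ,
        D.map_smul, ← Function.iterate_succ_apply' (⇑D), Nat.add_sub_add_right]
      rcases Nat.lt_or_ge m n with h | h
      · rw [show (n - (m + 1)).succ = n - m by omega, Nat.cast_add, add_smul, add_comm]
      · rw [Nat.choose_eq_zero_of_lt (show n < m + 1 by omega)]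
        simp

lemma chain (F : MvPolynomial (ι × ℕ) ℂ →ₐ[ℂ] MvPolynomial (ι × ℕ) ℂ) [Fintype ι]
    (u : MvPolynomial (ι × ℕ) ℂ) :
    ∀ᶠ B : ℕ in Filter.atTop, (∀ c, pderiv c (F u) =
      ∑ b : ι, ∑ n ∈ Finset.range B, pderiv c (F (X (b, n))) * F (pderiv (b, n) u)) ∧
      ∀ b : ι, ∀ n ≥ B, pderiv (b, n) u = 0 := by
  classical
  induction u using MvPolynomial.induction_on with
  | C r =>
    refine Filter.Eventually.of_forall fun B => ⟨fun c => ?_, by simp⟩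
    have : F (C r) = C r := F.commutes r
    simp [this]
  | add p q hp hq =>
    filter_upwards [hp, hq] with B h1 h2
    refine ⟨fun c => ?_, fun b n hn => by simp [h1.2 b n hn, h2.2 b n hn]⟩
    simp only [map_add, h1.1, h2.1, mul_add, Finset.sum_add_distrib]
  | mul_X p i hp =>
    obtain ⟨b0, n0⟩ := i
    filter_upwards [hp, Filter.eventually_gt_atTop n0] with B h1 h2
    refine ⟨fun c => ?_, fun b n hn => ?_⟩
    · have key : ∑ b : ι, ∑ n ∈ Finset.range B, pderiv c (F (X (b, n))) *
          F (pderiv (b, n) (X (b0, n0))) = pderiv c (F (X (b0, n0))) := by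
        rw [Finset.sum_eq_single b0, Finset.sum_eq_single n0]
        · simp
        · intro n _ hn
          rw [pderiv_X_of_ne (by simp [Ne.symm hn])]; simp
        · simp [h2]
        · intro b _ hb
          refine Finset.sum_eq_zero fun n _ => ?_
          rw [pderiv_X_of_ne (by simp [Ne.symm hb])]; simp
        · simp
      rw [map_mul, Derivation.leibniz, smul_eq_mul, smul_eq_mul, h1.1 c, ← key]
      simp only [Finset.mul_sum, ← Finset.sum_add_distrib]
      refine Finset.sum_congr rfl fun b _ => Finset.sum_congr rfl fun n _ => ?_
      simp only [Derivation.leibniz, smul_eq_mul, map_add, map_mul]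
      ring
    · rw [Derivation.leibniz, h1.2 b n hn, pderiv_X_of_ne]
      · simp
      · simp only [ne_eq, Prod.mk.injEq, not_and]; intro _; omega

lemma D_iter_sum {α : Type*} (s : Finset α) (g : α → MvPolynomial (ι × ℕ) ℂ) (i : ℕ) :
    (⇑D)^[i] (∑ x ∈ s, g x) = ∑ x ∈ s, (⇑D)^[i] (g x) := by
  have h : (⇑D)^[i] = ⇑((D : Module.End ℂ (MvPolynomial (ι × ℕ) ℂ)) ^ i) := by
    rw [Module.End.coe_pow]; rfl
  rw [h, map_sum]

lemma D_iter_smul (r : ℂ) (g : MvPolynomial (ι × ℕ) ℂ) (i : ℕ) :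
    (⇑D)^[i] (r • g) = r • (⇑D)^[i] g := by
  have h : (⇑D)^[i] = ⇑((D : Module.End ℂ (MvPolynomial (ι × ℕ) ℂ)) ^ i) := by
    rw [Module.End.coe_pow]; rfl
  rw [h, map_smul]

lemma D_iter_zero (i : ℕ) : (⇑D)^[i] 0 = 0 := by
  simpa using D_iter_smul D 0 0 i

/-- inverse Leibniz -/
lemma inv_leib (w : MvPolynomial (ι × ℕ) ℂ) (N : ℕ) : ∀ J : MvPolynomial (ι × ℕ) ℂ,
    ∑ i ∈ Finset.range (N + 1), ((-1 : ℂ) ^ i * (N.choose i : ℂ)) •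
      (⇑D)^[i] ((⇑D)^[N - i] J * w) = (-1 : ℂ) ^ N • (J * (⇑D)^[N] w) := by
  induction N with
  | zero => intro J; simp
  | succ N ih =>
    intro J
    have h1 := ih (D J)
    have h2 := congrArg D (ih J)
    rw [map_sum] at h2
    have e : ∑ i ∈ Finset.range (N + 2), ((-1 : ℂ) ^ i * ((N + 1).choose i : ℂ)) •
      (⇑D)^[i] ((⇑D)^[N + 1 - i] J * w) =
      ∑ i ∈ Finset.range (N + 1), ((-1 : ℂ) ^ i * (N.choose i : ℂ)) •
        (⇑D)^[i] ((⇑D)^[N - i] (D J) * w) -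
      ∑ i ∈ Finset.range (N + 1), D (((-1 : ℂ) ^ i * (N.choose i : ℂ)) •
        (⇑D)^[i] ((⇑D)^[N - i] J * w)) := by
      have e1 : ∑ i ∈ Finset.range (N + 1), ((-1 : ℂ) ^ i * (N.choose i : ℂ)) •
        (⇑D)^[i] ((⇑D)^[N - i] (D J) * w) = ∑ i ∈ Finset.range (N + 2),
          ((-1 : ℂ) ^ i * (N.choose i : ℂ)) • (⇑D)^[i] ((⇑D)^[N + 1 - i] J * w) := by
        rw [Finset.sum_range_succ _ (N + 1)]
        simp only [Nat.choose_succ_self, Nat.cast_zero, mul_zero, zero_smul, add_zero]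
        refine Finset.sum_congr rfl fun i hi => ?_
        rw [← Function.iterate_succ_apply (⇑D), show (N - i).succ = N + 1 - i by
          have := Finset.mem_range.mp hi; omega]
      rw [e1, Finset.sum_range_succ' _ (N + 1), Finset.sum_range_succ' _ (N + 1)]
      simp only [Nat.choose_zero_right]
      rw [add_sub_right_comm, ← Finset.sum_sub_distrib]
      congr 1
      refine Finset.sum_congr rfl fun i hi => ?_
      rw [D.map_smul, ← Function.iterate_succ_apply' (⇑D), Nat.add_sub_add_right, ← sub_smul]
      congr 1
      rw [Nat.choose_succ_succ]; push_cast; ring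
    rw [e, h1, h2, D.map_smul, Derivation.leibniz, ← Function.iterate_succ_apply' (⇑D),
      ← smul_sub, pow_succ, mul_smul]
    congr 1
    simp only [smul_eq_mul, neg_smul, one_smul]
    ring

lemma euler_eq (k : ℕ) (a : ι) (u : MvPolynomial (ι × ℕ) ℂ) (B : ℕ)
    (h : ∀ n ≥ B, pderiv (a, n) u = 0) :
    eulerOp D k a u = ∑ i ∈ Finset.range B,
      ((-1 : ℂ) ^ i * ((k + i).choose k : ℂ)) • (⇑D)^[i] (pderiv (a, k + i) u) := by
  unfold eulerOp
  apply finsum_eq_sum_of_support_subset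
  intro i hi
  by_contra hc
  apply hi
  simp only [Finset.coe_range, Set.mem_Iio, not_lt] at hc
  simp only
  rw [h _ (by omega), D_iter_zero, smul_zero]

end helpers

/-- The covariant transformation law of the higher Euler operators under prolonged maps:
`δ_{k,a}(F u) = ∑_b Ĵ_a^b · F(δ_{k,b} u)`. -/
theorem stmt_4 (ι : Type*) [Fintype ι] (f : ι → MvPolynomial ι ℂ)
    (D : Derivation ℂ (MvPolynomial (ι × ℕ) ℂ) (MvPolynomial (ι × ℕ) ℂ))
    (hD : ∀ (a : ι) (k : ℕ), D (X (a, k)) = X (a, k + 1))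
    (F : MvPolynomial (ι × ℕ) ℂ →ₐ[ℂ] MvPolynomial (ι × ℕ) ℂ)
    (hF0 : ∀ a : ι, F (X (a, 0)) = rename (fun a : ι => (a, 0)) (f a))
    (hFD : ∀ u : MvPolynomial (ι × ℕ) ℂ, F (D u) = D (F u))
    (u : MvPolynomial (ι × ℕ) ℂ) (a : ι) (k : ℕ) :
    eulerOp D k a (F u) =
      ∑ b : ι, rename (fun a : ι => (a, 0)) (pderiv a (f b)) * F (eulerOp D k b u) := by
  classical
  have hFi : ∀ (i : ℕ) v, F ((⇑D)^[i] v) = (⇑D)^[i] (F v) := by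
    intro i
    induction i with
    | zero => intro v; rfl
    | succ i ih => intro v; rw [Function.iterate_succ_apply, ih, hFD, Function.iterate_succ_apply]
  have hX : ∀ (b : ι) (n : ℕ), F (X (b, n)) = (⇑D)^[n] (rename (fun a : ι => (a, 0)) (f b)) := by
    intro b n
    induction n with
    | zero => exact hF0 b
    | succ n ih => rw [← hD, hFD, ih, Function.iterate_succ_apply']
  have hinj : Function.Injective (fun a : ι => ((a, 0) : ι × ℕ)) := fun x y h => by simpa using h
  have hpd : ∀ (b : ι) (m n : ℕ), pderiv (a, m) (F (X (b, n))) =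
      (n.choose m : ℂ) • (⇑D)^[n - m] (rename (fun a : ι => (a, 0)) (pderiv a (f b))) := by
    intro b m n
    rw [hX, pd_iter D hD]
    · rw [← pderiv_rename hinj]
    · intro m
      apply pderiv_eq_zero_of_notMem_vars
      intro hm
      have := vars_rename _ _ hm
      simp at this
  obtain ⟨M, hM⟩ := Filter.eventually_atTop.mp (chain F u)
  have hz := (hM M le_rfl).2
  have hc := (hM (k + M) (by omega)).1
  have hzF : ∀ n ≥ M, pderiv (a, n) (F u) = 0 := by
    intro n hn
    rw [(hM M le_rfl).1]
    refine Finset.sum_eq_zero fun b _ => Finset.sum_eq_zero fun j hj => ?_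
    have := Finset.mem_range.mp hj
    rw [hpd, Nat.choose_eq_zero_of_lt (by omega)]
    simp
  rw [euler_eq D k a (F u) M hzF]
  simp only [hc, D_iter_sum, Finset.smul_sum]
  rw [Finset.sum_comm]
  refine Finset.sum_congr rfl fun b _ => ?_
  rw [euler_eq D k b u M (hz b), Finset.sum_comm, Finset.sum_range_add, map_sum, Finset.mul_sum]
  rw [Finset.sum_eq_zero, zero_add]
  · refine Finset.sum_congr rfl fun N hN => ?_
    have hN' := Finset.mem_range.mp hN
    have hpb := hpd b
    generalize rename (fun a : ι => ((a, 0) : ι × ℕ)) (pderiv a (f b)) = J at hpb ⊢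
    rw [map_smul, hFi]
    generalize F (pderiv (b, k + N) u) = w
    have key := congrArg (fun z => ((k + N).choose k : ℂ) • z) (inv_leib D w N J)
    simp only [Finset.smul_sum] at key
    rw [mul_smul_comm, mul_comm ((-1 : ℂ) ^ N), mul_smul, ← key]
    symm
    apply Finset.sum_subset_zero_on_sdiff
    · intro i hi
      simp only [Finset.mem_range] at hi ⊢
      omega
    · intro i hi
      simp only [Finset.mem_sdiff, Finset.mem_range] at hi
      rw [hpb, Nat.choose_eq_zero_of_lt (show k + N < k + i by omega)]
      simp [D_iter_zero]
    · intro i hi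
      have hi' := Finset.mem_range.mp hi
      rw [hpb, smul_mul_assoc, D_iter_smul, smul_smul, smul_smul,
        show k + N - (k + i) = N - i by omega]
      congr 1
      have hch := Nat.choose_mul (n := k + N) (k := k + i) (s := k) (by omega)
      rw [Nat.add_sub_cancel_left, Nat.add_sub_cancel_left] at hch
      have hch' : ((k + N).choose (k + i) : ℂ) * ((k + i).choose k : ℂ) =
        ((k + N).choose k : ℂ) * (N.choose i : ℂ) := by exact_mod_cast hch
      linear_combination (-(-1 : ℂ) ^ i) * hch'
  · intro n hn
    have := Finset.mem_range.mp hn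
    refine Finset.sum_eq_zero fun i _ => ?_
    rw [hpd]
    rcases Nat.lt_or_ge n (k+i) with h | h
    · rw [Nat.choose_eq_zero_of_lt h]; simp [D_iter_zero]
    · omega
end

section
/- Let ι be a finite type. For all u, v ∈ R and every pair of indices a, b ∈ ι, one has ∑_{k,ℓ ≥ 0} ∂^{k+ℓ}( (δ_{k,a} u) · (δ_{ℓ,b} v) ) = ∑_{k,ℓ ≥ 0} ( ∂^ℓ( ∂_{k,a} u ) ) · ( ∂^k( ∂_{ℓ,b} v ) ), where all four sums have only finitely many nonzero terms (since δ_{k,a} u = 0, δ_{ℓ,b} v = 0, ∂_{k,a} u = 0 and ∂_{ℓ,b} v = 0 for all large k, ℓ). -/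
open MvPolynomial

open scoped TensorProduct

lemma binom_end {M : Type*} [AddCommGroup M] [Module ℂ M] (A B : Module.End ℂ M)
    (h : Commute A B) (N m : ℕ) (hm : m < N) :
    ∑ k ∈ Finset.range N, (A + B) ^ k * ((-A) ^ (m - k) * (m.choose k : Module.End ℂ M)) = B ^ m := by
  have hc : Commute (A + B) (-A) := ((Commute.refl A).add_left h.symm).neg_right
  have h1 := hc.add_pow m
  have h2 : A + B + -A = B := by abel
  rw [h2] at h1
  rw [h1]
  symm
  apply Finset.sum_subset_zero_on_sdiff
  · intro x hx; simp only [Finset.mem_range] at *; omega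
  · intro x hx
    have : m < x := by simp only [Finset.mem_sdiff, Finset.mem_range] at hx; omega
    simp [Nat.choose_eq_zero_of_lt this]
  · intro x hx
    rw [mul_assoc]

lemma end_key {M : Type*} [AddCommGroup M] [Module ℂ M] (A B : Module.End ℂ M)
    (h : Commute A B) (N : ℕ) (t : ℕ → ℕ → M) :
    ∑ k ∈ Finset.range N, ∑ l ∈ Finset.range N, ((A + B) ^ (k + l))
      (∑ m ∈ Finset.range N, ∑ n ∈ Finset.range N,
        (((-A) ^ (m - k) * (m.choose k : Module.End ℂ M)) *
          ((-B) ^ (n - l) * (n.choose l : Module.End ℂ M))) (t m n)) =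
    ∑ m ∈ Finset.range N, ∑ n ∈ Finset.range N, (B ^ m * A ^ n) (t m n) := by
  have hc : Commute (A + B) (-A) := ((Commute.refl A).add_left h.symm).neg_right
  have e : ∀ m ∈ Finset.range N, ∀ n ∈ Finset.range N, (B ^ m * A ^ n) (t m n) =
      ∑ k ∈ Finset.range N, ∑ l ∈ Finset.range N, ((A + B) ^ (k + l)) 
        ((((-A) ^ (m - k) * (m.choose k : Module.End ℂ M)) *
          ((-B) ^ (n - l) * (n.choose l : Module.End ℂ M))) (t m n)) := by
    intro m hm n hn
    rw [← binom_end A B h N m (Finset.mem_range.1 hm),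
      ← binom_end B A h.symm N n (Finset.mem_range.1 hn), Finset.sum_mul_sum]
    simp only [LinearMap.sum_apply]
    refine Finset.sum_congr rfl fun k _ => Finset.sum_congr rfl fun l _ => ?_
    rw [← Module.End.mul_apply]
    congr 1
    rw [add_comm B A, pow_add]
    have hcc : Commute ((-A) ^ (m - k) * (m.choose k : Module.End ℂ M)) ((A + B) ^ l) :=
      ((hc.symm.pow_pow _ _).mul_left (Nat.cast_commute _ _))
    simp only [mul_assoc]
    congr 1
    simpa only [mul_assoc] using
      congrArg (· * ((-B) ^ (n - l) * (n.choose l : Module.End ℂ M))) hcc.eq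
  rw [Finset.sum_congr rfl fun m hm => Finset.sum_congr rfl fun n hn => e m hm n hn]
  simp only [map_sum]
  calc _ = ∑ k ∈ Finset.range N, ∑ m ∈ Finset.range N, ∑ l ∈ Finset.range N,
        ∑ n ∈ Finset.range N, _ := Finset.sum_congr rfl fun k _ => Finset.sum_comm
    _ = ∑ m ∈ Finset.range N, ∑ k ∈ Finset.range N, ∑ l ∈ Finset.range N,
        ∑ n ∈ Finset.range N, _ := Finset.sum_comm
    _ = ∑ m ∈ Finset.range N, ∑ k ∈ Finset.range N, ∑ n ∈ Finset.range N,
        ∑ l ∈ Finset.range N, _ := 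
          Finset.sum_congr rfl fun m _ => Finset.sum_congr rfl fun k _ => Finset.sum_comm
    _ = _ := Finset.sum_congr rfl fun m _ => Finset.sum_comm

lemma pderiv_bound {ι : Type*} (u : MvPolynomial (ι × ℕ) ℂ) (a : ι) :
    ∃ N, ∀ k, N ≤ k → pderiv (a, k) u = 0 := by
  classical
  refine ⟨(u.vars.image Prod.snd).sup id + 1, fun k hk => ?_⟩
  apply pderiv_eq_zero_of_notMem_vars
  intro hmem
  have : k ≤ (u.vars.image Prod.snd).sup id :=
    Finset.le_sup (f := id) (Finset.mem_image.2 ⟨_, hmem, rfl⟩)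
  omega

lemma finsum_range {M : Type*} [AddCommMonoid M] (f : ℕ → M) (N : ℕ)
    (h : ∀ k, N ≤ k → f k = 0) : ∑ᶠ k, f k = ∑ k ∈ Finset.range N, f k := by
  apply finsum_eq_sum_of_support_subset
  intro k hk
  simp only [Finset.coe_range, Set.mem_Iio]
  by_contra hh
  exact hk (h k (not_lt.1 hh))

lemma eulerOp_eq {ι : Type*}
    (D : Derivation ℂ (MvPolynomial (ι × ℕ) ℂ) (MvPolynomial (ι × ℕ) ℂ))
    (k : ℕ) (a : ι) (u : MvPolynomial (ι × ℕ) ℂ) (N : ℕ)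
    (h : ∀ k, N ≤ k → pderiv (a, k) u = 0) :
    eulerOp D k a u = ∑ m ∈ Finset.range N,
      ((-(D : Module.End ℂ (MvPolynomial (ι × ℕ) ℂ))) ^ (m - k) *
        (m.choose k : Module.End ℂ (MvPolynomial (ι × ℕ) ℂ))) (pderiv (a, m) u) := by
  set L : Module.End ℂ (MvPolynomial (ι × ℕ) ℂ) := (D : Module.End ℂ (MvPolynomial (ι × ℕ) ℂ)) with hL
  set F : ℕ → MvPolynomial (ι × ℕ) ℂ := fun m => ((-L) ^ (m - k) *
        (m.choose k : Module.End ℂ (MvPolynomial (ι × ℕ) ℂ))) (pderiv (a, m) u) with hF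
  have hF0 : ∀ m, N ≤ m → F m = 0 := fun m hm => by simp [hF, h m hm]
  have hF1 : ∀ m, m < k → F m = 0 := fun m hm => by simp [hF, Nat.choose_eq_zero_of_lt hm]
  have hit : ∀ i w, (⇑D)^[i] w = (L ^ i) w := fun i w => by
    rw [Module.End.pow_apply]; rfl
  have e1 : eulerOp D k a u = ∑ᶠ i, F (k + i) := by
    unfold eulerOp
    refine finsum_congr fun i => ?_
    rw [hit]
    simp only [hF, Nat.add_sub_cancel_left, neg_pow L i, Module.End.mul_apply,
      Module.End.natCast_apply, map_nsmul]
    rw [mul_smul, Nat.cast_smul_eq_nsmul]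
    rcases Nat.even_or_odd i with hi | hi <;> simp [hi.neg_one_pow]
  rw [e1, finsum_range _ N (fun i hi => hF0 _ (by omega))]
  change _ = ∑ m ∈ Finset.range N, F m
  have e2 : ∑ m ∈ Finset.range (k + N), F m = ∑ m ∈ Finset.range N, F m := by
    rw [add_comm, Finset.sum_range_add, Finset.sum_eq_zero (s := Finset.range k), add_zero]
    intro x _; exact hF0 _ (by omega)
  rw [← e2, Finset.sum_range_add, Finset.sum_eq_zero (s := Finset.range k), zero_add]
  intro x hx; exact hF1 _ (Finset.mem_range.1 hx)

/-- Soloviev's identity (Lemma 4.5, i.e. Soloviev's Statement 6.1.1), even constant-coefficient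
form: `∑_{k,ℓ} ∂^{k+ℓ}(δ_{k,a}u · δ_{ℓ,b}v) = ∑_{k,ℓ} ∂^ℓ(∂_{k,a}u) · ∂^k(∂_{ℓ,b}v)`. -/
theorem stmt_9 (ι : Type*) [Fintype ι]
    (D : Derivation ℂ (MvPolynomial (ι × ℕ) ℂ) (MvPolynomial (ι × ℕ) ℂ))
    (hD : ∀ (a : ι) (k : ℕ), D (X (a, k)) = X (a, k + 1))
    (u v : MvPolynomial (ι × ℕ) ℂ) (a b : ι) :
    (∑ᶠ (k : ℕ) (ℓ : ℕ), (⇑D)^[k + ℓ] (eulerOp D k a u * eulerOp D ℓ b v)) =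
      ∑ᶠ (k : ℕ) (ℓ : ℕ), (⇑D)^[ℓ] (pderiv (a, k) u) * (⇑D)^[k] (pderiv (b, ℓ) v) := by
  obtain ⟨N1, h1⟩ := pderiv_bound u a
  obtain ⟨N2, h2⟩ := pderiv_bound v b
  obtain ⟨N, hu, hv⟩ : ∃ N, (∀ k, N ≤ k → pderiv (a, k) u = 0) ∧
      (∀ k, N ≤ k → pderiv (b, k) v = 0) :=
    ⟨max N1 N2, fun k hk => h1 k (le_trans (le_max_left _ _) hk),
      fun k hk => h2 k (le_trans (le_max_right _ _) hk)⟩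
  set L : Module.End ℂ (MvPolynomial (ι × ℕ) ℂ) := (D : Module.End ℂ (MvPolynomial (ι × ℕ) ℂ)) with hL
  have hit : ∀ i w, (⇑D)^[i] w = (L ^ i) w := fun i w => by
    rw [Module.End.pow_apply]; rfl
  have z : ∀ (w : MvPolynomial (ι × ℕ) ℂ) (c : ι), (∀ k, N ≤ k → pderiv (c, k) w = 0) →
      ∀ k, N ≤ k → eulerOp D k c w = 0 := by
    intro w c hw k hk
    rw [eulerOp_eq D k c w N hw]
    refine Finset.sum_eq_zero fun m hm => ?_
    have : m < k := lt_of_lt_of_le (Finset.mem_range.1 hm) hk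
    simp [Nat.choose_eq_zero_of_lt this]
  have zu := z u a hu
  have zv := z v b hv
  simp only [hit]
  rw [finsum_range _ N (fun k hk => by simp [zu k hk]),
    finsum_range _ N (fun k hk => by simp [hu k hk])]
  rw [Finset.sum_congr rfl fun k _ => finsum_range _ N (fun l hl => by simp [zv l hl]),
    Finset.sum_congr rfl fun k _ => finsum_range _ N (fun l hl => by simp [hv l hl])]
  set A : Module.End ℂ (TensorProduct ℂ (MvPolynomial (ι × ℕ) ℂ) (MvPolynomial (ι × ℕ) ℂ)) :=
    TensorProduct.map L (LinearMap.id : Module.End ℂ (MvPolynomial (ι × ℕ) ℂ)) with hA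
  set B : Module.End ℂ (TensorProduct ℂ (MvPolynomial (ι × ℕ) ℂ) (MvPolynomial (ι × ℕ) ℂ)) :=
    TensorProduct.map (LinearMap.id : Module.End ℂ (MvPolynomial (ι × ℕ) ℂ)) L with hB
  have hAB : Commute A B := by
    apply TensorProduct.ext'
    intro x y
    simp [hA, hB]
  let μ := LinearMap.mul' ℂ (MvPolynomial (ι × ℕ) ℂ)
  have hμ : ∀ n t, μ (((A + B) ^ n) t) = (L ^ n) (μ t) := by
    intro n
    induction n with
    | zero => intro t; simp
    | succ n ih =>
      intro t
      rw [pow_succ, pow_succ, Module.End.mul_apply, Module.End.mul_apply, ih]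
      congr 1
      have : μ ∘ₗ (A + B) = L ∘ₗ μ := by
        apply TensorProduct.ext'
        intro x y
        simp [hA, hB, μ, hL]
        ring
      exact LinearMap.congr_fun this t
  have pA : ∀ n x y, (A ^ n) (x ⊗ₜ[ℂ] y) = ((L ^ n) x) ⊗ₜ[ℂ] y := by
    intro n
    induction n with
    | zero => intro x y; simp
    | succ n ih => intro x y; rw [pow_succ, pow_succ, Module.End.mul_apply, Module.End.mul_apply]; exact ih (L x) y
  have pB : ∀ n x y, (B ^ n) (x ⊗ₜ[ℂ] y) = x ⊗ₜ[ℂ] ((L ^ n) y) := by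
    intro n
    induction n with
    | zero => intro x y; simp
    | succ n ih => intro x y; rw [pow_succ, pow_succ, Module.End.mul_apply, Module.End.mul_apply]; exact ih x (L y)
  have nA : ∀ n x y, ((-A) ^ n) (x ⊗ₜ[ℂ] y) = (((-L) ^ n) x) ⊗ₜ[ℂ] y := by
    intro n
    induction n with
    | zero => intro x y; simp
    | succ n ih =>
      intro x y
      have h0 : (-A) (x ⊗ₜ[ℂ] y) = (-(L x)) ⊗ₜ[ℂ] y := by
        rw [LinearMap.neg_apply, TensorProduct.neg_tmul]; rfl
      rw [pow_succ, pow_succ, Module.End.mul_apply, Module.End.mul_apply, h0]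
      exact ih (-(L x)) y
  have nB : ∀ n x y, ((-B) ^ n) (x ⊗ₜ[ℂ] y) = x ⊗ₜ[ℂ] (((-L) ^ n) y) := by
    intro n
    induction n with
    | zero => intro x y; simp
    | succ n ih =>
      intro x y
      have h0 : (-B) (x ⊗ₜ[ℂ] y) = x ⊗ₜ[ℂ] (-(L y)) := by
        rw [LinearMap.neg_apply, TensorProduct.tmul_neg]; rfl
      rw [pow_succ, pow_succ, Module.End.mul_apply, Module.End.mul_apply, h0]
      exact ih x (-(L y))
  have key := congrArg μ (end_key A B hAB N
    (fun m n => (pderiv (a, m) u) ⊗ₜ[ℂ] (pderiv (b, n) v)))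
  simp only [map_sum (g := μ), hμ] at key
  convert key using 1
  · refine Finset.sum_congr rfl fun k _ => Finset.sum_congr rfl fun l _ => ?_
    congr 1
    rw [eulerOp_eq D k a u N hu, eulerOp_eq D l b v N hv, Finset.sum_mul_sum]
    refine Finset.sum_congr rfl fun m _ => Finset.sum_congr rfl fun n _ => ?_
    simp only [Module.End.mul_apply, Module.End.natCast_apply, map_nsmul, nA, nB]
    simp [μ, hL]
    ring
  · refine Finset.sum_congr rfl fun k _ => Finset.sum_congr rfl fun l _ => ?_
    simp only [Module.End.mul_apply, pA, pB]
    simp [μ]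
end

section
/- Let ι be a finite type. If u ∈ R satisfies ∂u = 0, then u is a constant, i.e. u lies in the image of the structure map algebraMap ℂ R. -/
open MvPolynomial

/-- The kernel of the total derivative on the jet algebra consists of the constants. -/
theorem stmt_13 (ι : Type*) [Fintype ι]
    (D : Derivation ℂ (MvPolynomial (ι × ℕ) ℂ) (MvPolynomial (ι × ℕ) ℂ))
    (hD : ∀ (a : ι) (k : ℕ), D (X (a, k)) = X (a, k + 1))
    (u : MvPolynomial (ι × ℕ) ℂ) (hu : D u = 0) :
    u ∈ Set.range (algebraMap ℂ (MvPolynomial (ι × ℕ) ℂ)) := by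
  classical
  have comm : ∀ (a : ι) (k : ℕ), ⁅pderiv (R := ℂ) (a, k + 1), D⁆ = pderiv (a, k) := by
    intro a k
    apply derivation_ext
    rintro ⟨b, l⟩
    have h1 : D (pderiv (a, k + 1) (X (b, l))) = 0 := by
      by_cases h : (b, l) = (a, k + 1)
      · rw [h, pderiv_X_self, Derivation.map_one_eq_zero]
      · rw [pderiv_X_of_ne h, map_zero]
    rw [Derivation.commutator_apply, h1, hD, sub_zero]
    by_cases h : (b, l) = (a, k)
    · obtain ⟨rfl, rfl⟩ := Prod.mk.inj h
      rw [pderiv_X_self, pderiv_X_self]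
    · rw [pderiv_X_of_ne h, pderiv_X_of_ne]
      intro h'
      apply h
      simpa using h'
  have step : ∀ (a : ι) (k : ℕ), pderiv (a, k + 1) u = 0 → pderiv (a, k) u = 0 := by
    intro a k h
    rw [← comm, Derivation.commutator_apply, h, hu, map_zero, map_zero, sub_zero]
  have down : ∀ (a : ι) (n k : ℕ), pderiv (a, k + n) u = 0 → pderiv (a, k) u = 0 := by
    intro a n
    induction n with
    | zero => intro k h; exact h
    | succ n ih => intro k h; exact ih k (step a (k + n) h)
  have all : ∀ i : ι × ℕ, pderiv i u = 0 := by
    rintro ⟨a, k⟩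
    apply down a (u.vars.sup Prod.snd + 1) k
    apply pderiv_eq_zero_of_notMem_vars
    intro h
    have := Finset.le_sup (f := Prod.snd) h
    simp only at this
    omega
  refine ⟨coeff 0 u, ?_⟩
  rw [algebraMap_eq]
  ext m
  rw [coeff_C]
  split_ifs with h
  · rw [h]
  · obtain ⟨i, hi⟩ : ∃ i, m i ≠ 0 := by
      by_contra! hc
      exact h (by ext i; simp [hc i])
    have hm : m - Finsupp.single i 1 + Finsupp.single i 1 = m := by
      apply tsub_add_cancel_of_le
      rw [Finsupp.single_le_iff]
      omega
    have := coeff_pderiv (i := i) u (m - Finsupp.single i 1)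
    rw [all i, hm, coeff_zero] at this
    rcases mul_eq_zero.mp this.symm with h0 | h0
    · exact h0.symm
    · exact absurd h0 (Nat.cast_add_one_ne_zero _)
end

section
/- Let ι be a finite type. Let ρ : R → R be the unique ℂ-derivation with ρ(t^a_0) = 0 and ρ(t^a_{k+1}) = k(k+1) · t^a_k for all a ∈ ι, k ∈ ℕ, and let H : R → R be the unique ℂ-derivation with H(t^a_k) = k · t^a_k for all a, k. Then, as ℂ-linear endomorphisms of R: H∘∂ - ∂∘H = ∂, H∘ρ - ρ∘H = -ρ, and ∂∘ρ - ρ∘∂ = -2·H. (In particular ∂, ρ, H generate an action of the Lie algebra sl(2) on R.) -/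
open MvPolynomial

/-- The `sl(2)` commutation relations among the total derivative `∂`, the lowering operator
`ρ` and the grading operator `H` on the jet algebra. -/
theorem stmt_14 (ι : Type*) [Fintype ι]
    (D ρ H : Derivation ℂ (MvPolynomial (ι × ℕ) ℂ) (MvPolynomial (ι × ℕ) ℂ))
    (hD : ∀ (a : ι) (k : ℕ), D (X (a, k)) = X (a, k + 1))
    (hρ0 : ∀ a : ι, ρ (X (a, 0)) = 0)
    (hρ : ∀ (a : ι) (k : ℕ), ρ (X (a, k + 1)) = (k * (k + 1)) • X (a, k))
    (hH : ∀ (a : ι) (k : ℕ), H (X (a, k)) = k • X (a, k)) :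
    (∀ u : MvPolynomial (ι × ℕ) ℂ, H (D u) - D (H u) = D u) ∧
      (∀ u : MvPolynomial (ι × ℕ) ℂ, H (ρ u) - ρ (H u) = -(ρ u)) ∧
      (∀ u : MvPolynomial (ι × ℕ) ℂ, D (ρ u) - ρ (D u) = -(2 • H u)) := by
  have h1 : ⁅H, D⁆ = D := by
    apply MvPolynomial.derivation_ext
    rintro ⟨a, k⟩
    rw [Derivation.commutator_apply, hD, hH, hH, map_nsmul, hD]
    simp only [nsmul_eq_mul]
    push_cast
    ring
  have h2 : ⁅H, ρ⁆ = -ρ := by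
    apply MvPolynomial.derivation_ext
    rintro ⟨a, k⟩
    rw [Derivation.commutator_apply, Derivation.neg_apply, hH, map_nsmul]
    cases k with
    | zero => simp [hρ0]
    | succ k =>
      rw [hρ, map_nsmul, hH]
      simp only [nsmul_eq_mul]
      push_cast
      ring
  have h3 : ⁅D, ρ⁆ = -(2 • H) := by
    apply MvPolynomial.derivation_ext
    rintro ⟨a, k⟩
    rw [Derivation.commutator_apply, Derivation.neg_apply, Derivation.smul_apply, hD, hρ, hH]
    cases k with
    | zero => simp [hρ0]
    | succ k =>
      rw [hρ, map_nsmul, hD]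
      simp only [nsmul_eq_mul]
      push_cast
      ring
  refine ⟨fun u => ?_, fun u => ?_, fun u => ?_⟩
  · rw [← Derivation.commutator_apply, h1]
  · rw [← Derivation.commutator_apply, h2, Derivation.neg_apply]
  · rw [← Derivation.commutator_apply, h3, Derivation.neg_apply, Derivation.smul_apply]
end

section
/- Let A be an associative unital ℚ-algebra and let ∂, d, d₀, ε, ι ∈ A satisfy: ε·ι + ι·ε = 1; d₀·ι + ι·d₀ = 0; d·ε + ε·d = 0; d·d₀ + d₀·d = 0; d₀·d₀ = 0; ∂·ε = ε·∂; ∂·ι = ι·∂; and ∂·d₀ = d₀·∂. Then (1 + (1/2)·ε·d₀) · (ι·∂ - d + (1/2)·∂·d₀) = (ι·∂ - d) · (1 + (1/2)·ε·d₀). -/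
/-- The operator identity showing that `T = 1 + ½ ε d₀` intertwines `ι∂ - d + ½ ∂ d₀`
with `ι∂ - d`, given the stated (anti)commutation relations. -/
theorem stmt_19 (A : Type*) [Ring A] [Algebra ℚ A]
    (p d d₀ e i : A)
    (h1 : e * i + i * e = 1)
    (h2 : d₀ * i + i * d₀ = 0)
    (h3 : d * e + e * d = 0)
    (h4 : d * d₀ + d₀ * d = 0)
    (h5 : d₀ * d₀ = 0)
    (h6 : p * e = e * p)
    (h7 : p * i = i * p)
    (h8 : p * d₀ = d₀ * p) :
    (1 + (1 / 2 : ℚ) • (e * d₀)) * (i * p - d + (1 / 2 : ℚ) • (p * d₀)) =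
      (i * p - d) * (1 + (1 / 2 : ℚ) • (e * d₀)) := by
  have a : e * d₀ * (p * d₀) = 0 := by
    rw [h8, mul_assoc, ← mul_assoc d₀ d₀ p, h5]; simp
  have b : e * d₀ * (i * p) = i * p * (e * d₀) - p * d₀ := by
    have x1 : d₀ * i = -(i * d₀) := eq_neg_of_add_eq_zero_left h2
    have x2 : e * i = 1 - i * e := eq_sub_of_add_eq h1
    calc e * d₀ * (i * p) = e * (d₀ * i) * p := by noncomm_ring
      _ = -((e * i) * (d₀ * p)) := by rw [x1]; noncomm_ring
      _ = i * e * (p * d₀) - p * d₀ := by rw [x2, ← h8]; noncomm_ring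
      _ = i * (e * p) * d₀ - p * d₀ := by noncomm_ring
      _ = i * p * (e * d₀) - p * d₀ := by rw [← h6]; noncomm_ring
  have c : e * d₀ * d = d * (e * d₀) := by
    have x1 : d₀ * d = -(d * d₀) := eq_neg_of_add_eq_zero_right h4
    have x2 : d * e = -(e * d) := eq_neg_of_add_eq_zero_left h3
    rw [mul_assoc, x1, ← mul_assoc d, x2]; noncomm_ring
  simp only [add_mul, mul_add, mul_sub, sub_mul, one_mul, mul_one, smul_mul_assoc,
    mul_smul_comm, a, b, c, smul_zero, smul_sub]
  module
end
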